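/- arXiv:2401.01878 — 6 statements merged into one kernel-verified Lean document; each statement's English description precedes it below -/
import Mathlib

section
/- Let G be a profinite group and H a closed subgroup of G. Then the normalizer of H in G equals the intersection, over all open normal subgroups U of G, of the normalizers of the subgroups HU; that is, N_G(H) = ⋂_{U open normal in G} N_G(HU). -/
theorem Subgroup.normalizer_le_normalizer_sup_of_normal {G : Type*} [Group G]
    (H U : Subgroup G) [U.Normal] :
    normalizer (H : Set G) ≤ normalizer ((H ⊔ U : Subgroup G) : Set G) := by
  intro g hg
  have hU : g ∈ normalizer (U : Set G) := by simp [normalizer_eq_top]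
  rw [mem_normalizer_iff_map_conj_eq] at hg hU ⊢
  rw [map_sup, hg, hU]

/-- A closed subgroup `H` of a profinite group is the intersection of the subgroups `HU`, where
`U` ranges over the open normal subgroups. -/
theorem Subgroup.mem_iff_forall_mem_sup_of_isClosed
    {G : Type*} [Group G] [TopologicalSpace G] [IsTopologicalGroup G]
    [CompactSpace G] [T2Space G] [TotallyDisconnectedSpace G]
    {H : Subgroup G} (hH : IsClosed (H : Set G)) {x : G} :
    x ∈ H ↔ ∀ U : Subgroup G, IsOpen (U : Set G) → U.Normal → x ∈ H ⊔ U := by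
  refine ⟨fun hx U _ _ => mem_sup_left hx, fun h => ?_⟩
  by_contra hx
  have hV : IsOpen {u : G | x * u⁻¹ ∈ (H : Set G)ᶜ} :=
    hH.isOpen_compl.preimage (by fun_prop)
  obtain ⟨N, hN⟩ := ProfiniteGrp.exist_openNormalSubgroup_sub_open_nhds_of_one hV
    (by simpa using hx)
  obtain ⟨y, hy, z, hz, rfl⟩ :=
    mem_sup_of_normal_right.mp (h N.toSubgroup N.isOpen' N.isNormal')
  exact hN hz (by simpa using hy)

/-- Let `G` be a profinite group and `H` a closed subgroup of `G`.  Then the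
normalizer of `H` in `G` equals the intersection, over all open normal subgroups `U` of `G`,
of the normalizers of the subgroups `HU` (the subgroup generated by `H` and `U`). -/
theorem normalizer_eq_iInf_normalizer_sup
    {G : Type*} [Group G] [TopologicalSpace G] [IsTopologicalGroup G]
    [CompactSpace G] [T2Space G] [TotallyDisconnectedSpace G]
    (H : Subgroup G) (hH : IsClosed (H : Set G)) :
    Subgroup.normalizer (H : Set G) =
      ⨅ (U : Subgroup G) (_ : IsOpen (U : Set G)) (_ : U.Normal), Subgroup.normalizer ((H ⊔ U : Subgroup G) : Set G) := by
  refine le_antisymm (le_iInf fun U => le_iInf fun _ => le_iInf fun _ =>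
    H.normalizer_le_normalizer_sup_of_normal U) fun g hg => ?_
  simp only [Subgroup.mem_iInf] at hg
  refine Subgroup.mem_normalizer_iff.mpr fun h => ?_
  simp only [Subgroup.mem_iff_forall_mem_sup_of_isClosed hH]
  exact forall₃_congr fun U hU hUn => Subgroup.mem_normalizer_iff.mp (hg U hU hUn) h
end

section
/- Let G be a profinite group and H a closed subgroup of G. For each open normal subgroup U of G, the quotient map G → G/U induces a group homomorphism from the Weyl group W_G(H) = N_G(H)/H to the Weyl group W_{G/U}(HU/U) = N_{G/U}(HU/U)/(HU/U). The resulting homomorphism from W_G(H) to the product ∏_U W_{G/U}(HU/U) over all open normal subgroups U of G is injective, and its image is exactly the inverse limit, i.e., the set of families (w_U)_U that are compatible in the sense that whenever U ≤ V are open normal subgroups of G, the homomorphism W_{G/U}(HU/U) → W_{G/V}(HV/V) induced by the projection G/U → G/V sends w_U to w_V. In other words, W_G(H) ≅ lim_U W_{G/U}(HU/U). -/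
/-- The Weyl group `W_Γ(K) = N_Γ(K)/K` of a subgroup `K` of a group `Γ`. -/
def WeylGroup {Γ : Type*} [Group Γ] (K : Subgroup Γ) : Type _ :=
  Subgroup.normalizer (K : Set Γ) ⧸ K.subgroupOf (Subgroup.normalizer (K : Set Γ))

instance {Γ : Type*} [Group Γ] (K : Subgroup Γ) : Group (WeylGroup K) :=
  inferInstanceAs (Group (Subgroup.normalizer (K : Set Γ) ⧸ K.subgroupOf (Subgroup.normalizer (K : Set Γ))))

/-- A group homomorphism maps the normalizer of `K` into the normalizer of the image of `K`. -/
theorem mem_normalizer_map {Γ Γ' : Type*} [Group Γ] [Group Γ'] (f : Γ →* Γ') {K : Subgroup Γ}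
    {x : Γ} (hx : x ∈ Subgroup.normalizer (K : Set Γ)) : f x ∈ Subgroup.normalizer (Subgroup.map f K : Set Γ') := by
  rw [Subgroup.mem_normalizer_iff] at hx ⊢
  intro y
  constructor
  · rintro ⟨k, hk, rfl⟩
    exact ⟨x * k * x⁻¹, (hx k).mp hk, by simp [map_mul, map_inv]⟩
  · rintro ⟨k, hk, hfk⟩
    refine ⟨x⁻¹ * k * x, ?_, ?_⟩
    · have h : x * (x⁻¹ * k * x) * x⁻¹ = k := by group
      exact (hx (x⁻¹ * k * x)).mpr (by rw [h]; exact hk)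
    · have hy : y = (f x)⁻¹ * f k * f x := by
        rw [hfk]; group
      rw [hy]
      simp [map_mul, map_inv, mul_assoc]

/-- The homomorphism `N_Γ(K) → N_{Γ'}(f(K))` induced by `f : Γ →* Γ'`. -/
def normalizerRestrict {Γ Γ' : Type*} [Group Γ] [Group Γ'] (f : Γ →* Γ') (K : Subgroup Γ) :
    Subgroup.normalizer (K : Set Γ) →* Subgroup.normalizer (Subgroup.map f K : Set Γ') :=
  MonoidHom.codRestrict (f.comp (Subgroup.normalizer (K : Set Γ)).subtype) _
    (fun x => mem_normalizer_map f x.2)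

/-- The homomorphism of Weyl groups `W_Γ(K) → W_{Γ'}(K')` induced by `f : Γ →* Γ'` when
`K'` is the image of `K` under `f`. -/
def weylMap {Γ Γ' : Type*} [Group Γ] [Group Γ'] (f : Γ →* Γ') (K : Subgroup Γ)
    (K' : Subgroup Γ') (hK' : Subgroup.map f K = K') :
    WeylGroup K →* WeylGroup K' := by
  subst hK'
  exact QuotientGroup.map (K.subgroupOf (Subgroup.normalizer (K : Set Γ)))
    ((Subgroup.map f K).subgroupOf (Subgroup.normalizer (Subgroup.map f K : Set Γ')))
    (normalizerRestrict f K)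
    (fun x hx => by
      have hx' : (x : Γ) ∈ K := hx
      show ((normalizerRestrict f K x :
          Subgroup.normalizer (Subgroup.map f K : Set Γ')) : Γ') ∈ Subgroup.map f K
      exact Subgroup.mem_map_of_mem f hx')

/-- Composing the image in `G/U` with the projection `G/U → G/V` gives the image in `G/V`. -/
theorem map_quotientMap_map_mk' {G : Type*} [Group G] (H U V : Subgroup G)
    [U.Normal] [V.Normal] (hUV : U ≤ V) :
    Subgroup.map (QuotientGroup.map U V (MonoidHom.id G) (fun x hx => hUV hx))
        (Subgroup.map (QuotientGroup.mk' U) H)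
      = Subgroup.map (QuotientGroup.mk' V) H := by
  rw [Subgroup.map_map]
  congr 1

/-- The class in the Weyl group `W_Γ(K)` of an element normalizing `K`. -/
def weylMk {Γ : Type*} [Group Γ] (K : Subgroup Γ) (x : Γ)
    (hx : x ∈ Subgroup.normalizer (K : Set Γ)) : WeylGroup K :=
  QuotientGroup.mk (⟨x, hx⟩ : Subgroup.normalizer (K : Set Γ))

theorem exists_weylMk_eq {Γ : Type*} [Group Γ] {K : Subgroup Γ} (w : WeylGroup K) :
    ∃ (x : Γ) (hx : x ∈ Subgroup.normalizer (K : Set Γ)), weylMk K x hx = w := by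
  obtain ⟨⟨x, hx⟩, rfl⟩ := QuotientGroup.mk_surjective w
  exact ⟨x, hx, rfl⟩

theorem weylMk_eq_iff {Γ : Type*} [Group Γ] {K : Subgroup Γ} {x y : Γ}
    {hx : x ∈ Subgroup.normalizer (K : Set Γ)} {hy : y ∈ Subgroup.normalizer (K : Set Γ)} :
    weylMk K x hx = weylMk K y hy ↔ x⁻¹ * y ∈ K :=
  QuotientGroup.eq

theorem weylMap_weylMk {Γ Γ' : Type*} [Group Γ] [Group Γ'] (f : Γ →* Γ') (K : Subgroup Γ)
    (K' : Subgroup Γ') (hK' : Subgroup.map f K = K') (x : Γ)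
    (hx : x ∈ Subgroup.normalizer (K : Set Γ)) :
    weylMap f K K' hK' (weylMk K x hx) =
      weylMk K' (f x) (hK' ▸ mem_normalizer_map f hx) := by
  subst hK'
  rfl

section Profinite

variable {G : Type*} [Group G] [TopologicalSpace G] [IsTopologicalGroup G]
  [CompactSpace G] {H : Subgroup G}

/-- A closed subgroup of a profinite group contains every element whose image in each finite
quotient lies in the image of the subgroup. -/
theorem mem_of_forall_mk_mem_map [TotallyDisconnectedSpace G]
    (hH : IsClosed (H : Set G)) {x : G}
    (hx : ∀ U : OpenNormalSubgroup G,
      QuotientGroup.mk' U.toSubgroup x ∈ Subgroup.map (QuotientGroup.mk' U.toSubgroup) H) :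
    x ∈ H := by
  by_contra hxH
  have hopen : IsOpen {y : G | x * y ∉ H} :=
    hH.isOpen_compl.preimage (continuous_const_mul x)
  obtain ⟨U, hU⟩ := ProfiniteGrp.exist_openNormalSubgroup_sub_open_nhds_of_one hopen
    (by simpa using hxH)
  obtain ⟨h, hh, hhx⟩ := hx U
  have hmem : x⁻¹ * h ∈ U.toSubgroup := QuotientGroup.eq.mp hhx.symm
  exact hU hmem (by simpa using hh)

/-- An element normalizing the image of a closed subgroup in each finite quotient of a profinite
group normalizes the subgroup. -/
theorem mem_normalizer_of_forall_mk_mem_normalizer [TotallyDisconnectedSpace G]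
    (hH : IsClosed (H : Set G)) {x : G}
    (hx : ∀ U : OpenNormalSubgroup G, QuotientGroup.mk' U.toSubgroup x ∈
      Subgroup.normalizer (Subgroup.map (QuotientGroup.mk' U.toSubgroup) H : Set _)) :
    x ∈ Subgroup.normalizer (H : Set G) := by
  rw [Subgroup.mem_normalizer_iff]
  intro y
  constructor
  · intro hy
    refine mem_of_forall_mk_mem_map hH fun U => ?_
    rw [map_mul, map_mul, map_inv]
    exact (Subgroup.mem_normalizer_iff.mp (hx U) _).mp (Subgroup.mem_map_of_mem _ hy)
  · intro hy
    refine mem_of_forall_mk_mem_map hH fun U => ?_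
    refine (Subgroup.mem_normalizer_iff.mp (hx U) _).mpr ?_
    rw [← map_inv, ← map_mul, ← map_mul]
    exact Subgroup.mem_map_of_mem _ hy

/-- A compatible family of classes in the Weyl groups of the finite quotients is represented by a
single element of the group. -/
theorem exists_forall_weylMk_eq
    (w : ∀ U : OpenNormalSubgroup G,
      WeylGroup (Subgroup.map (QuotientGroup.mk' U.toSubgroup) H))
    (hw : ∀ (U V : OpenNormalSubgroup G) (hUV : U.toSubgroup ≤ V.toSubgroup),
      weylMap
        (QuotientGroup.map U.toSubgroup V.toSubgroup (MonoidHom.id G) (fun x hx => hUV hx))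
        (Subgroup.map (QuotientGroup.mk' U.toSubgroup) H)
        (Subgroup.map (QuotientGroup.mk' V.toSubgroup) H)
        (map_quotientMap_map_mk' H U.toSubgroup V.toSubgroup hUV) (w U) = w V) :
    ∃ x : G, ∀ U : OpenNormalSubgroup G, ∃ hx, weylMk _ (QuotientGroup.mk' U.toSubgroup x) hx =
      w U := by
  let S : OpenNormalSubgroup G → Set G := fun U =>
    {x | ∃ hx, weylMk _ (QuotientGroup.mk' U.toSubgroup x) hx = w U}
  have hclosed (U : OpenNormalSubgroup G) : IsClosed (S U) := by
    have : DiscreteTopology (G ⧸ U.toSubgroup) :=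
      QuotientGroup.discreteTopology U.isOpen'
    exact (isClosed_discrete {q : G ⧸ U.toSubgroup | ∃ hq, weylMk _ q hq = w U}).preimage
      continuous_quotient_mk'
  have hne (U : OpenNormalSubgroup G) : (S U).Nonempty := by
    obtain ⟨q, hq, hqw⟩ := exists_weylMk_eq (w U)
    obtain ⟨x, rfl⟩ := QuotientGroup.mk'_surjective U.toSubgroup q
    exact ⟨x, hq, hqw⟩
  have hmono {U V : OpenNormalSubgroup G} (hUV : U.toSubgroup ≤ V.toSubgroup) : S U ⊆ S V := by
    rintro x ⟨hx, hxw⟩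
    have h := hw U V hUV
    rw [← hxw, weylMap_weylMk] at h
    exact ⟨_, h⟩
  have hdir : Directed (· ⊇ ·) S := fun U V =>
    ⟨U ⊓ V, hmono (inf_le_left : U ⊓ V ≤ U), hmono (inf_le_right : U ⊓ V ≤ V)⟩
  have : Nonempty (OpenNormalSubgroup G) :=
    ⟨{ toOpenSubgroup := ⊤, isNormal' := inferInstanceAs (⊤ : Subgroup G).Normal }⟩
  obtain ⟨x, hx⟩ := IsCompact.nonempty_iInter_of_directed_nonempty_isCompact_isClosed S hdir hne
    (fun U => (hclosed U).isCompact) hclosed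
  exact ⟨x, Set.mem_iInter.mp hx⟩

end Profinite

/-- For a profinite group `G` and a closed subgroup `H`, the natural map from
the Weyl group `W_G(H)` to the product of the Weyl groups `W_{G/U}(HU/U)` over all open normal
subgroups `U` of `G` is injective, and a family lies in its image precisely when it is
compatible with the maps induced by the projections `G/U → G/V` for `U ≤ V`; that is,
`W_G(H) ≅ lim_U W_{G/U}(HU/U)`. -/
theorem weylGroup_eq_limit
    {G : Type*} [Group G] [TopologicalSpace G] [IsTopologicalGroup G]
    [CompactSpace G] [T2Space G] [TotallyDisconnectedSpace G]
    (H : Subgroup G) (hH : IsClosed (H : Set G)) :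
    Function.Injective (fun w : WeylGroup H => fun U : OpenNormalSubgroup G =>
      weylMap (QuotientGroup.mk' U.toSubgroup) H
        (Subgroup.map (QuotientGroup.mk' U.toSubgroup) H) rfl w) ∧
    ∀ w : ∀ U : OpenNormalSubgroup G,
        WeylGroup (Subgroup.map (QuotientGroup.mk' U.toSubgroup) H),
      (∃ w₀ : WeylGroup H, ∀ U : OpenNormalSubgroup G,
          weylMap (QuotientGroup.mk' U.toSubgroup) H
            (Subgroup.map (QuotientGroup.mk' U.toSubgroup) H) rfl w₀ = w U) ↔
      ∀ (U V : OpenNormalSubgroup G) (hUV : U.toSubgroup ≤ V.toSubgroup),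
        weylMap
          (QuotientGroup.map U.toSubgroup V.toSubgroup (MonoidHom.id G)
            (fun x hx => hUV hx))
          (Subgroup.map (QuotientGroup.mk' U.toSubgroup) H)
          (Subgroup.map (QuotientGroup.mk' V.toSubgroup) H)
          (map_quotientMap_map_mk' H U.toSubgroup V.toSubgroup hUV) (w U) = w V := by
  refine ⟨fun a b hab => ?_, fun w => ⟨?_, fun hw => ?_⟩⟩
  · obtain ⟨x, hx, rfl⟩ := exists_weylMk_eq a
    obtain ⟨y, hy, rfl⟩ := exists_weylMk_eq b
    refine weylMk_eq_iff.mpr (mem_of_forall_mk_mem_map hH fun U => ?_)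
    have hU := congrFun hab U
    simp only [weylMap_weylMk, weylMk_eq_iff] at hU
    rwa [map_mul, map_inv]
  · rintro ⟨w₀, hw₀⟩ U V hUV
    obtain ⟨x, hx, rfl⟩ := exists_weylMk_eq w₀
    rw [← hw₀ U, ← hw₀ V, weylMap_weylMk, weylMap_weylMk, weylMap_weylMk]
    rfl
  · obtain ⟨x, hx⟩ := exists_forall_weylMk_eq w hw
    choose hxN hxw using hx
    refine ⟨weylMk H x (mem_normalizer_of_forall_mk_mem_normalizer hH hxN), fun U => ?_⟩
    rw [weylMap_weylMk]
    exact hxw U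
end

section
/- Let H be a closed subgroup of a profinite group G and let p be a prime. For an open normal subgroup U of G write G_U = G/U and H_U = HU/U for the image of H in G_U. Then the following statements are equivalent: (1) O^p(H) = O^p(G); (2) O^p(H_U) = O^p(G_U) for every open normal subgroup U of G; (3) O^p(G) ≤ H; (4) O^p(G_U) ≤ H_U for every open normal subgroup U of G; (5) for every open normal subgroup U of G, the subgroup H_U is p-subnormal in G_U, i.e., there is a finite chain of subgroups H_U = L_k ⊴ L_{k-1} ⊴ ⋯ ⊴ L_1 = G_U in which each L_{i+1} is normal in L_i with quotient L_i/L_{i+1} a finite p-group. -/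
/-- A (closed normal) subgroup `N` of a topological group `G` has pro-`p` quotient if every
open normal subgroup `U` of `G` containing `N` has index a power of `p`
(equivalently, `G/N` is a pro-`p` group). -/
def HasProPQuotient (p : ℕ) {G : Type*} [Group G] [TopologicalSpace G] (N : Subgroup G) : Prop :=
  ∀ U : Subgroup G, IsOpen (U : Set G) → U.Normal → N ≤ U → ∃ k : ℕ, U.index = p ^ k

/-- `O^p(G)`: the intersection of all closed normal subgroups of `G` with pro-`p` quotient. -/
def pResidual (p : ℕ) (G : Type*) [Group G] [TopologicalSpace G] : Subgroup G :=
  sInf {N : Subgroup G | IsClosed (N : Set G) ∧ N.Normal ∧ HasProPQuotient p N}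

/-- `O^p(Q)` for a finite group `Q`: the intersection of all normal subgroups `M` of `Q`
such that `Q/M` is a `p`-group (i.e. `M` has index a power of `p`). -/
def pResidualFinite (p : ℕ) (Q : Type*) [Group Q] : Subgroup Q :=
  sInf {M : Subgroup Q | M.Normal ∧ ∃ k : ℕ, M.index = p ^ k}

/-- A subgroup `K` of a group `Q` is `p`-subnormal if there is a finite chain
`K = L_k ⊴ L_{k-1} ⊴ ⋯ ⊴ L_1 = Q` in which each term is normal in the next one with
quotient a finite `p`-group. -/
def IsPSubnormal (p : ℕ) {Q : Type*} [Group Q] (K : Subgroup Q) : Prop :=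
  ∃ (n : ℕ) (L : Fin (n + 1) → Subgroup Q),
    L 0 = ⊤ ∧ L (Fin.last n) = K ∧
      ∀ i : Fin n,
        L i.succ ≤ L i.castSucc ∧
        ((L i.succ).subgroupOf (L i.castSucc)).Normal ∧
        ∃ k : ℕ, (L i.succ).relIndex (L i.castSucc) = p ^ k

section IndexPrimePow

variable {G : Type*} [Group G] {p : ℕ}

theorem exists_eq_prime_pow_of_dvd (hp : p.Prime) {m n : ℕ} (hmn : m ∣ n)
    (hn : ∃ k : ℕ, n = p ^ k) : ∃ k : ℕ, m = p ^ k := by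
  obtain ⟨k, rfl⟩ := hn
  obtain ⟨j, -, hj⟩ := (Nat.dvd_prime_pow hp).1 hmn
  exact ⟨j, hj⟩

theorem exists_mul_eq_prime_pow {m n : ℕ} (hm : ∃ k : ℕ, m = p ^ k)
    (hn : ∃ k : ℕ, n = p ^ k) : ∃ k : ℕ, m * n = p ^ k := by
  obtain ⟨j, rfl⟩ := hm
  obtain ⟨k, rfl⟩ := hn
  exact ⟨j + k, (pow_add p j k).symm⟩

theorem Subgroup.index_inf_eq_prime_pow (hp : p.Prime) {V W : Subgroup G} [V.Normal]
    (hV : ∃ k : ℕ, V.index = p ^ k) (hW : ∃ k : ℕ, W.index = p ^ k) :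
    ∃ k : ℕ, (V ⊓ W).index = p ^ k := by
  rw [← Subgroup.relIndex_mul_index (inf_le_right : V ⊓ W ≤ W), Subgroup.inf_relIndex_right]
  exact exists_mul_eq_prime_pow
    (exists_eq_prime_pow_of_dvd hp (V.relIndex_dvd_index_of_normal _) hV) hW

end IndexPrimePow

section PResidual

variable {p : ℕ} {G : Type*} [Group G] [TopologicalSpace G]

theorem HasProPQuotient.of_index (hp : p.Prime) {N : Subgroup G}
    (hN : ∃ k : ℕ, N.index = p ^ k) : HasProPQuotient p N :=
  fun _ _ _ hNU => exists_eq_prime_pow_of_dvd hp (Subgroup.index_dvd_of_le hNU) hN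

instance pResidual_normal : (pResidual p G).Normal := by
  rw [pResidual, sInf_eq_iInf]
  exact Subgroup.normal_iInf_normal fun _ => Subgroup.normal_iInf_normal fun hN => hN.2.1

theorem isClosed_pResidual : IsClosed (pResidual p G : Set G) := by
  rw [pResidual, Subgroup.coe_sInf]
  exact isClosed_biInter fun _ hN => hN.1

theorem pResidual_le_of_isOpen [IsTopologicalGroup G] (hp : p.Prime) {V : Subgroup G}
    (hV : IsOpen (V : Set G)) (hVn : V.Normal) (hVi : ∃ k : ℕ, V.index = p ^ k) :
    pResidual p G ≤ V :=
  sInf_le ⟨V.isClosed_of_isOpen hV, hVn, .of_index hp hVi⟩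

theorem pResidual_eq_pResidualFinite [DiscreteTopology G] (hp : p.Prime) :
    pResidual p G = pResidualFinite p G := by
  refine congrArg sInf (Set.ext fun M => ⟨fun hM => ⟨hM.2.1, ?_⟩, fun hM => ?_⟩)
  · exact hM.2.2 M (isOpen_discrete _) hM.2.1 le_rfl
  · exact ⟨isClosed_discrete _, hM.1, .of_index hp hM.2⟩

end PResidual

section Profinite

variable {p : ℕ} {G : Type*} [Group G] [TopologicalSpace G] [IsTopologicalGroup G]
  [CompactSpace G] [TotallyDisconnectedSpace G]

theorem Subgroup.mem_of_forall_mem_sup_openNormalSubgroup {N : Subgroup G}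
    (hN : IsClosed (N : Set G)) {x : G} (hx : ∀ U : OpenNormalSubgroup G, x ∈ N ⊔ U.toSubgroup) :
    x ∈ N := by
  by_contra hxN
  obtain ⟨U, hU⟩ := ProfiniteGrp.exist_openNormalSubgroup_sub_open_nhds_of_one
    (U := (fun g => x * g) ⁻¹' (N : Set G)ᶜ) (hN.isOpen_compl.preimage (continuous_const_mul x))
    (by simpa using hxN)
  obtain ⟨n, hn, u, hu, rfl⟩ := Subgroup.mem_sup_of_normal_right.1 (hx U)
  exact hU (inv_mem (show u ∈ U from hu)) (by simpa using hn)

theorem mem_pResidual_iff (hp : p.Prime) {x : G} :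
    x ∈ pResidual p G ↔
      ∀ V : Subgroup G, IsOpen (V : Set G) → V.Normal → (∃ k : ℕ, V.index = p ^ k) → x ∈ V := by
  refine ⟨fun hx V hV hVn hVi => pResidual_le_of_isOpen hp hV hVn hVi hx, fun hx => ?_⟩
  refine Subgroup.mem_sInf.2 fun N hN => ?_
  obtain ⟨hNc, hNn, hNq⟩ := hN
  refine Subgroup.mem_of_forall_mem_sup_openNormalSubgroup hNc fun U => ?_
  have hop : IsOpen ((N ⊔ U.toSubgroup : Subgroup G) : Set G) :=
    Subgroup.isOpen_mono le_sup_right U.isOpen'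
  exact hx _ hop inferInstance (hNq _ hop inferInstance le_sup_left)

theorem hasProPQuotient_pResidual (hp : p.Prime) : HasProPQuotient p (pResidual p G) := by
  intro U hU _ hRU
  let ι := {V : Subgroup G // IsOpen (V : Set G) ∧ V.Normal ∧ ∃ k : ℕ, V.index = p ^ k}
  have : Nonempty ι := ⟨⊤, isOpen_univ, inferInstance, 0, by simp⟩
  obtain ⟨V, hV⟩ := hU.isClosed_compl.isCompact.elim_directed_family_closed
    (fun V : ι => (V.1 : Set G)) (fun V => V.1.isClosed_of_isOpen V.2.1)
    (by
      refine Set.eq_empty_iff_forall_notMem.2 fun x hx => hx.1 (hRU ?_)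
      exact (mem_pResidual_iff hp).2 fun V h₁ h₂ h₃ => Set.mem_iInter.1 hx.2 ⟨V, h₁, h₂, h₃⟩)
    (by
      rintro ⟨V, hV, hVn, hVi⟩ ⟨W, hW, hWn, hWi⟩
      exact ⟨⟨V ⊓ W, hV.inter hW, inferInstance, Subgroup.index_inf_eq_prime_pow hp hVi hWi⟩,
        Set.inter_subset_left, Set.inter_subset_right⟩)
  refine exists_eq_prime_pow_of_dvd hp (Subgroup.index_dvd_of_le fun x hx => ?_) V.2.2.2
  by_contra hxU
  exact Set.notMem_empty x (hV ▸ ⟨hxU, hx⟩)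

theorem pResidual_le_comap {K : Type*} [Group K] [TopologicalSpace K] [IsTopologicalGroup K]
    [CompactSpace K] [TotallyDisconnectedSpace K] (hp : p.Prime) (f : K →* G)
    (hf : Continuous f) : pResidual p K ≤ (pResidual p G).comap f := by
  intro x hx
  refine (mem_pResidual_iff hp).2 fun V hV _ hVi => ?_
  refine (mem_pResidual_iff hp).1 hx (V.comap f) (hV.preimage hf) inferInstance ?_
  rw [Subgroup.index_comap]
  exact exists_eq_prime_pow_of_dvd hp (V.relIndex_dvd_index_of_normal _) hVi

theorem map_mk_pResidual (hp : p.Prime) (U : OpenNormalSubgroup G) :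
    (pResidual p G).map (QuotientGroup.mk' U.toSubgroup) = pResidual p (G ⧸ U.toSubgroup) := by
  have hsurj := QuotientGroup.mk'_surjective U.toSubgroup
  refine le_antisymm
    (Subgroup.map_le_iff_le_comap.2 (pResidual_le_comap hp _ continuous_quot_mk))
    (sInf_le ⟨isClosed_discrete _, pResidual_normal.map _ hsurj, fun W hW _ hRW => ?_⟩)
  rw [← W.index_comap_of_surjective hsurj]
  exact hasProPQuotient_pResidual hp _ (hW.preimage continuous_quot_mk) inferInstance
    (Subgroup.map_le_iff_le_comap.1 hRW)

theorem map_subtype_pResidual_le (hp : p.Prime) {H : Subgroup G} (hH : IsClosed (H : Set G)) :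
    (pResidual p H).map H.subtype ≤ pResidual p G := by
  have : CompactSpace H := isCompact_iff_compactSpace.1 hH.isCompact
  exact Subgroup.map_le_iff_le_comap.2 (pResidual_le_comap hp _ continuous_subtype_val)

theorem map_subtype_pResidual_normal (hp : p.Prime) {N : Subgroup G} [N.Normal]
    (hN : IsClosed (N : Set G)) : ((pResidual p N).map N.subtype).Normal := by
  have : CompactSpace N := isCompact_iff_compactSpace.1 hN.isCompact
  refine ⟨?_⟩
  rintro _ ⟨x, hx, rfl⟩ g
  refine ⟨MulAut.conjNormal g x, ?_, by simp⟩
  refine pResidual_le_comap hp (MulAut.conjNormal g : N ≃* N).toMonoidHom ?_ hx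
  exact Continuous.subtype_mk (f := fun y : N => g * (y : G) * g⁻¹) (by fun_prop) _

theorem map_subtype_pResidual_pResidual (hp : p.Prime) :
    (pResidual p (pResidual p G)).map (pResidual p G).subtype = pResidual p G := by
  have hc : IsClosed (pResidual p G : Set G) := isClosed_pResidual
  have : CompactSpace (pResidual p G) := isCompact_iff_compactSpace.1 hc.isCompact
  refine le_antisymm (map_subtype_pResidual_le hp hc) (sInf_le ⟨?_, ?_, fun U hU _ hRU => ?_⟩)
  · exact hc.isClosedEmbedding_subtypeVal.isClosedMap _ isClosed_pResidual
  · exact map_subtype_pResidual_normal hp hc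
  · have hop : IsOpen ((U ⊔ pResidual p G : Subgroup G) : Set G) :=
      Subgroup.isOpen_mono le_sup_left hU
    rw [← Subgroup.relIndex_mul_index (le_sup_left : U ≤ U ⊔ pResidual p G),
      Subgroup.relIndex_sup_left]
    exact exists_mul_eq_prime_pow
      (hasProPQuotient_pResidual hp (U.subgroupOf (pResidual p G))
        (hU.preimage continuous_subtype_val) inferInstance (Subgroup.map_le_iff_le_comap.1 hRU))
      (hasProPQuotient_pResidual hp _ hop inferInstance le_sup_right)

theorem map_subtype_pResidual_eq_iff (hp : p.Prime) {H : Subgroup G}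
    (hH : IsClosed (H : Set G)) :
    (pResidual p H).map H.subtype = pResidual p G ↔ pResidual p G ≤ H := by
  refine ⟨fun h => h ▸ Subgroup.map_subtype_le _, fun h => ?_⟩
  have : CompactSpace H := isCompact_iff_compactSpace.1 hH.isCompact
  have hc : IsClosed (pResidual p G : Set G) := isClosed_pResidual
  have : CompactSpace (pResidual p G) := isCompact_iff_compactSpace.1 hc.isCompact
  refine le_antisymm (map_subtype_pResidual_le hp hH) ?_
  conv_lhs => rw [← map_subtype_pResidual_pResidual hp]
  rintro _ ⟨x, hx, rfl⟩
  exact ⟨Subgroup.inclusion h x,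
    pResidual_le_comap hp (Subgroup.inclusion h) (continuous_inclusion h) hx, rfl⟩

theorem pResidual_le_iff_forall_openNormalSubgroup (hp : p.Prime) {H : Subgroup G}
    (hH : IsClosed (H : Set G)) :
    pResidual p G ≤ H ↔ ∀ U : OpenNormalSubgroup G,
      pResidual p (G ⧸ U.toSubgroup) ≤ H.map (QuotientGroup.mk' U.toSubgroup) := by
  simp_rw [← map_mk_pResidual hp]
  refine ⟨fun h U => Subgroup.map_mono h, fun h x hx => ?_⟩
  refine Subgroup.mem_of_forall_mem_sup_openNormalSubgroup hH fun U => ?_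
  have := Subgroup.map_le_iff_le_comap.1 (h U) hx
  rwa [Subgroup.comap_map_eq, QuotientGroup.ker_mk'] at this

end Profinite

section PSubnormal

variable {p : ℕ} {Q : Type*} [Group Q]

theorem IsPSubnormal.top : IsPSubnormal p (⊤ : Subgroup Q) :=
  ⟨0, fun _ => ⊤, rfl, rfl, fun i => i.elim0⟩

theorem IsPSubnormal.of_normal {K L : Subgroup Q} (hL : IsPSubnormal p L) (hKL : K ≤ L)
    (hn : (K.subgroupOf L).Normal) (hi : ∃ k : ℕ, K.relIndex L = p ^ k) : IsPSubnormal p K := by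
  obtain ⟨n, c, h0, hlast, hc⟩ := hL
  refine ⟨n + 1, Fin.snoc (α := fun _ => Subgroup Q) c K, ?_, by simp, fun i => ?_⟩
  · rw [← Fin.castSucc_zero, Fin.snoc_castSucc, h0]
  · induction i using Fin.lastCases with
    | last =>
      rw [Fin.succ_last, Fin.snoc_last, Fin.snoc_castSucc, hlast]
      exact ⟨hKL, hn, hi⟩
    | cast i =>
      rw [Fin.succ_castSucc, Fin.snoc_castSucc, Fin.snoc_castSucc]
      exact hc i

theorem Subgroup.lt_normalizer_of_index_eq_prime_pow (hp : p.Prime) {R K : Subgroup Q}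
    [R.Normal] (hR : ∃ k : ℕ, R.index = p ^ k) (hRK : R ≤ K) (hK : K ≠ ⊤) :
    K < Subgroup.normalizer (K : Set Q) := by
  have : Fact p.Prime := ⟨hp⟩
  obtain ⟨k, hk⟩ := hR
  have hcard : Nat.card (Q ⧸ R) = p ^ k := hk
  have : Finite (Q ⧸ R) := Nat.finite_of_card_ne_zero (hcard ▸ pow_ne_zero k hp.ne_zero)
  have : Group.IsNilpotent (Q ⧸ R) := (IsPGroup.of_card hcard).isNilpotent
  have hsurj := QuotientGroup.mk'_surjective R
  have hcomap : (K.map (QuotientGroup.mk' R)).comap (QuotientGroup.mk' R) = K :=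
    Subgroup.comap_map_eq_self (by rwa [QuotientGroup.ker_mk'])
  refine lt_of_le_of_ne Subgroup.le_normalizer fun h => hK ?_
  have hself := normalizerCondition_iff_only_full_group_self_normalizing.1
    (Group.normalizerCondition_of_isNilpotent (G := Q ⧸ R)) (K.map (QuotientGroup.mk' R))
    (Subgroup.comap_injective hsurj (by
      rw [Subgroup.comap_normalizer_eq_of_surjective _ hsurj, hcomap, ← h]))
  rw [← hcomap, hself, Subgroup.comap_top]

theorem isPSubnormal_of_index_eq_prime_pow_of_le (hp : p.Prime) {R K : Subgroup Q} [R.Normal]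
    (hR : ∃ k : ℕ, R.index = p ^ k) (hRK : R ≤ K) : IsPSubnormal p K := by
  have hKi := exists_eq_prime_pow_of_dvd hp (Subgroup.index_dvd_of_le hRK) hR
  induction hn : K.index using Nat.strong_induction_on generalizing K with
  | _ n ih =>
    by_cases hK : K = ⊤
    · exact hK ▸ .top
    have hlt := Subgroup.lt_normalizer_of_index_eq_prime_pow hp hR hRK hK
    have hRN := hRK.trans hlt.le
    have hfin : K.index ≠ 0 := by
      obtain ⟨k, hk⟩ := hKi
      exact hk ▸ pow_ne_zero k hp.ne_zero
    have : K.FiniteIndex := ⟨hfin⟩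
    refine (ih _ (hn ▸ Subgroup.index_strictAnti hlt) hRN
      (exists_eq_prime_pow_of_dvd hp (Subgroup.index_dvd_of_le hRN) hR) rfl).of_normal hlt.le
      inferInstance ?_
    exact exists_eq_prime_pow_of_dvd hp (Subgroup.relIndex_dvd_index_of_le hlt.le) hKi

theorem IsPSubnormal.pResidual_le [TopologicalSpace Q] [DiscreteTopology Q] [Finite Q]
    (hp : p.Prime) {K : Subgroup Q} (hK : IsPSubnormal p K) : pResidual p Q ≤ K := by
  obtain ⟨n, c, h0, rfl, hc⟩ := hK
  suffices ∀ i, pResidual p Q ≤ c i from this _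
  intro i
  induction i using Fin.induction with
  | zero => exact h0 ▸ le_top
  | succ i ih =>
    rw [← (map_subtype_pResidual_eq_iff hp (isClosed_discrete _)).2 ih,
      Subgroup.map_le_iff_le_comap]
    exact pResidual_le_of_isOpen hp (isOpen_discrete _) (hc i).2.1 (hc i).2.2

theorem isPSubnormal_iff_pResidual_le [TopologicalSpace Q] [DiscreteTopology Q] [Finite Q]
    (hp : p.Prime) {K : Subgroup Q} : IsPSubnormal p K ↔ pResidual p Q ≤ K :=
  ⟨fun hK => hK.pResidual_le hp, fun hK => isPSubnormal_of_index_eq_prime_pow_of_le hp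
    (hasProPQuotient_pResidual hp _ (isOpen_discrete _) inferInstance le_rfl) hK⟩

end PSubnormal

/-- Let `H` be a closed subgroup of a profinite group `G` and `p` a prime.
Writing `G_U = G/U` and `H_U = HU/U` (the image of `H` in `G_U`) for `U` an open normal
subgroup of `G`, the following are equivalent:
(1) `O^p(H) = O^p(G)`;
(2) `O^p(H_U) = O^p(G_U)` for every open normal subgroup `U`;
(3) `O^p(G) ≤ H`;
(4) `O^p(G_U) ≤ H_U` for every open normal subgroup `U`;
(5) `H_U` is `p`-subnormal in `G_U` for every open normal subgroup `U`. -/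
theorem pResidual_tfae (p : ℕ) (hp : p.Prime)
    {G : Type*} [Group G] [TopologicalSpace G] [IsTopologicalGroup G]
    [CompactSpace G] [T2Space G] [TotallyDisconnectedSpace G]
    (H : Subgroup G) (hH : IsClosed (H : Set G)) :
    List.TFAE
      [ Subgroup.map H.subtype (pResidual p ↥H) = pResidual p G,
        ∀ U : OpenNormalSubgroup G,
          Subgroup.map (Subgroup.map (QuotientGroup.mk' U.toSubgroup) H).subtype
              (pResidualFinite p ↥(Subgroup.map (QuotientGroup.mk' U.toSubgroup) H))
            = pResidualFinite p (G ⧸ U.toSubgroup),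
        pResidual p G ≤ H,
        ∀ U : OpenNormalSubgroup G,
          pResidualFinite p (G ⧸ U.toSubgroup)
            ≤ Subgroup.map (QuotientGroup.mk' U.toSubgroup) H,
        ∀ U : OpenNormalSubgroup G,
          IsPSubnormal p (Subgroup.map (QuotientGroup.mk' U.toSubgroup) H) ] := by
  simp_rw [← pResidual_eq_pResidualFinite hp]
  tfae_have 1 ↔ 3 := map_subtype_pResidual_eq_iff hp hH
  tfae_have 2 ↔ 4 := forall_congr' fun U => map_subtype_pResidual_eq_iff hp (isClosed_discrete _)
  tfae_have 3 ↔ 4 := pResidual_le_iff_forall_openNormalSubgroup hp hH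
  tfae_have 5 ↔ 4 := forall_congr' fun U => isPSubnormal_iff_pResidual_le hp
  tfae_finish
end

section
/- Let G be an abelian profinite group. Then the set of closed subgroups of G is countable if and only if G is topologically isomorphic to A × ℤ_{p_1} × ⋯ × ℤ_{p_r} for some r ≥ 0, pairwise distinct primes p_1, …, p_r, and some finite abelian group A; here ℤ_{p_i} denotes the additive group of p_i-adic integers with its natural topology, and topologically isomorphic means there is a group isomorphism that is also a homeomorphism. -/
/-- A bundled finite abelian group, regarded as a topological group with the discrete
topology. -/
structure FiniteAddCommGroup : Type 1 where
  carrier : Type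
  [grp : AddCommGroup carrier]
  [fin : Finite carrier]

attribute [instance] FiniteAddCommGroup.grp FiniteAddCommGroup.fin

instance (A : FiniteAddCommGroup) : TopologicalSpace A.carrier := ⊥
instance (A : FiniteAddCommGroup) : DiscreteTopology A.carrier := ⟨rfl⟩

section PadicProducts

variable {ι : Type*} {p : ι → ℕ} [∀ i, Fact (p i).Prime]

theorem dvd_of_forall_norm_le {n : ℕ}
    (hprimes : ∀ q : ℕ, q.Prime → q ∣ n → ∃ i, p i = q) {k : ℤ}
    (hk : ∀ i, ‖(k : ℤ_[p i])‖ ≤ ‖(n : ℤ_[p i])‖) : (n : ℤ) ∣ k := by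
  rw [Int.natCast_dvd, Nat.dvd_iff_prime_pow_dvd_dvd]
  intro q m hq hqm
  rcases Nat.eq_zero_or_pos m with rfl | hm
  · simp
  obtain ⟨i, rfl⟩ := hprimes q hq ((dvd_pow_self q hm.ne').trans hqm)
  rw [← Int.natCast_dvd, Nat.cast_pow]
  have h₁ : ‖((n : ℤ) : ℤ_[p i])‖ ≤ (p i : ℝ) ^ (-m : ℤ) := by
    rw [PadicInt.norm_int_le_pow_iff_dvd]
    exact_mod_cast hqm
  have := (hk i).trans ((congrArg norm (Int.cast_natCast n)).symm.trans_le h₁)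
  rw [PadicInt.norm_int_le_pow_iff_dvd] at this
  exact_mod_cast this

variable [Finite ι]

/-- Strong approximation: the integers are dense in a finite product of rings of `p`-adic integers
for pairwise distinct primes. -/
theorem denseRange_intCast_pi_padicInt (hp : Function.Injective p) :
    DenseRange (Int.cast : ℤ → ∀ i, ℤ_[p i]) := by
  cases nonempty_fintype ι
  refine Metric.denseRange_iff.2 fun c ε hε => ?_
  have hsmall : ∀ i, ∃ n : ℕ, (p i : ℝ) ^ (-n : ℤ) < ε := fun i =>
    PadicInt.exists_pow_neg_lt (p i) hε
  choose n hn using hsmall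
  have hcop : Pairwise fun i j =>
      IsCoprime (Ideal.span {((p i : ℤ)) ^ n i}) (Ideal.span {((p j : ℤ)) ^ n j}) := by
    intro i j hij
    rw [Ideal.isCoprime_span_singleton_iff]
    refine IsCoprime.pow (Nat.isCoprime_iff_coprime.2 ?_)
    exact (Nat.coprime_primes Fact.out Fact.out).2 (hp.ne hij)
  obtain ⟨k, hk⟩ := Ideal.exists_forall_sub_mem_ideal hcop fun i => ((c i).appr (n i) : ℤ)
  refine ⟨k, (dist_pi_lt_iff hε).2 fun i => ?_⟩
  refine lt_of_le_of_lt ?_ (hn i)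
  rw [dist_eq_norm, PadicInt.norm_le_pow_iff_mem_span_pow]
  have h₁ := PadicInt.appr_spec (n i) (c i)
  have h₂ : ((k - ((c i).appr (n i) : ℤ) : ℤ) : ℤ_[p i]) ∈ Ideal.span {(p i : ℤ_[p i]) ^ n i} := by
    have := Ideal.mem_span_singleton.1 (hk i)
    rw [Ideal.mem_span_singleton]
    simpa using (Int.castRingHom ℤ_[p i]).map_dvd this
  have := sub_mem h₁ h₂
  push_cast at this
  simpa using this

/-- Two continuous homomorphisms out of a product of rings of `p`-adic integers for distinct
primes agree as soon as they agree at `1`. -/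
theorem pi_padicInt_hom_ext (hp : Function.Injective p) {H : Type*} [AddCommGroup H]
    [TopologicalSpace H] [T2Space H] {f g : (∀ i, ℤ_[p i]) →+ H} (hf : Continuous f)
    (hg : Continuous g) (h : f 1 = g 1) : f = g := by
  refine DFunLike.coe_injective <|
    (denseRange_intCast_pi_padicInt hp).equalizer hf hg (funext fun k => ?_)
  have : (k : ∀ i, ℤ_[p i]) = k • 1 := by simp
  simp only [Function.comp_apply, this, map_zsmul, h]

/-- A closed subgroup of a product of rings of `p`-adic integers for distinct primes is stable
under multiplication. -/
theorem mul_mem_of_isClosed_pi_padicInt (hp : Function.Injective p)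
    {K : AddSubgroup (∀ i, ℤ_[p i])} (hK : IsClosed (K : Set (∀ i, ℤ_[p i])))
    (c : ∀ i, ℤ_[p i]) {x : ∀ i, ℤ_[p i]} (hx : x ∈ K) : c * x ∈ K := by
  refine (denseRange_intCast_pi_padicInt hp).induction_on (p := fun c => c * x ∈ K) c
    (hK.preimage (continuous_id.mul continuous_const)) fun k => ?_
  simpa [zsmul_eq_mul] using K.zsmul_mem hx k

end PadicProducts

section Countability

variable {G : Type*} [AddCommGroup G] [TopologicalSpace G] [IsTopologicalAddGroup G]
  [CompactSpace G]

theorem exists_isOpen_ne_top_of_prime_dvd_index {U : AddSubgroup G} (hU : IsOpen (U : Set G))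
    {q : ℕ} (hq : q.Prime) (hdvd : q ∣ U.index) :
    ∃ W : AddSubgroup G, IsOpen (W : Set G) ∧ W ≠ ⊤ ∧ ∀ g, q • g ∈ W := by
  have : Finite (G ⧸ U) := AddSubgroup.quotient_finite_of_isOpen U hU
  have : Fact q.Prime := ⟨hq⟩
  let f : G ⧸ U →+ G ⧸ U := nsmulAddMonoidHom q
  have hf : ¬ Function.Surjective f := by
    rw [← Finite.injective_iff_surjective]
    intro hinj
    obtain ⟨x, hx⟩ := exists_prime_addOrderOf_dvd_card' (G := G ⧸ U) q hdvd
    have hx0 : x = 0 := hinj <| by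
      simpa [f, hx] using addOrderOf_nsmul_eq_zero x
    rw [hx0, addOrderOf_zero] at hx
    exact hq.one_lt.ne hx
  refine ⟨f.range.comap (QuotientAddGroup.mk' U), ?_, fun h => hf ?_, fun g => ?_⟩
  · refine AddSubgroup.isOpen_mono (H₁ := U) (fun x hx => ?_) hU
    have : (x : G ⧸ U) = 0 := (QuotientAddGroup.eq_zero_iff x).2 hx
    simp [this]
  · rw [← AddMonoidHom.range_eq_top, eq_top_iff]
    intro y _
    obtain ⟨x, rfl⟩ := QuotientAddGroup.mk'_surjective U y
    have : x ∈ f.range.comap (QuotientAddGroup.mk' U) := h ▸ AddSubgroup.mem_top x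
    exact this
  · exact ⟨(g : G ⧸ U), by simp [f]⟩

theorem finite_of_countable_set {α : Type*} [Countable (Set α)] : Finite α := by
  by_contra h
  rw [not_finite_iff_infinite] at h
  have h₁ : Cardinal.mk (Set α) ≤ Cardinal.aleph0 := Cardinal.mk_le_aleph0
  rw [Cardinal.mk_set] at h₁
  exact ((Cardinal.aleph0_le_mk α).trans_lt (Cardinal.cantor _)).not_ge h₁

/-- If a compact abelian group has countably many closed subgroups, only finitely many primes
divide the index of one of its open subgroups. -/
theorem finite_primes_dvd_index [Countable {H : AddSubgroup G // IsClosed (H : Set G)}] :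
    {q : ℕ | q.Prime ∧ ∃ U : AddSubgroup G, IsOpen (U : Set G) ∧ q ∣ U.index}.Finite := by
  set T := {q : ℕ | q.Prime ∧ ∃ U : AddSubgroup G, IsOpen (U : Set G) ∧ q ∣ U.index}
  have hW : ∀ q : T, ∃ W : AddSubgroup G, IsOpen (W : Set G) ∧ W ≠ ⊤ ∧ ∀ g, (q : ℕ) • g ∈ W := by
    rintro ⟨q, hq, U, hU, hdvd⟩
    exact exists_isOpen_ne_top_of_prime_dvd_index hU hq hdvd
  choose W hWo hWt hWm using hW
  have key : ∀ (X : Set T) (q : T), ⨅ x ∈ X, W x ≤ W q → q ∈ X := by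
    intro X q hle
    by_contra hqX
    have hempty : ((W q : Set G)ᶜ ∩ ⋂ x : X, (W x : Set G)) = ∅ := by
      ext y
      simp only [Set.mem_inter_iff, Set.mem_compl_iff, SetLike.mem_coe, Set.mem_iInter,
        Set.mem_empty_iff_false, iff_false, not_and]
      intro hy h
      exact hy (hle (by simpa [AddSubgroup.mem_iInf] using h))
    obtain ⟨F, hF⟩ := (hWo q).isClosed_compl.isCompact.elim_finite_subfamily_closed _
      (fun x : X => (W x).isClosed_of_isOpen (hWo x)) hempty
    refine hWt q (eq_top_iff.2 fun g _ => ?_)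
    have hprod : (∏ x ∈ F, ((x : T) : ℕ)) • g ∈ W q := by
      by_contra hg
      refine Set.eq_empty_iff_forall_notMem.1 hF ((∏ x ∈ F, ((x : T) : ℕ)) • g) ⟨hg, ?_⟩
      simp only [Set.mem_iInter, SetLike.mem_coe]
      intro x hx
      obtain ⟨m, hm⟩ := Finset.dvd_prod_of_mem (fun x : X => ((x : T) : ℕ)) hx
      rw [hm, mul_nsmul']
      exact hWm _ _
    have hcop : Nat.Coprime (∏ x ∈ F, ((x : T) : ℕ)) q := by
      refine Nat.Coprime.prod_left fun x _ => (Nat.coprime_primes x.1.2.1 q.2.1).2 fun h => ?_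
      exact hqX (Subtype.ext h ▸ x.2)
    obtain ⟨a, b, hab⟩ := Nat.isCoprime_iff_coprime.2 hcop
    have : g = a • ((∏ x ∈ F, ((x : T) : ℕ)) • g) + b • ((q : ℕ) • g) := by
      rw [← natCast_zsmul, ← natCast_zsmul, ← mul_zsmul', ← mul_zsmul', ← add_zsmul]
      rw [mul_comm _ a, mul_comm _ b, hab, one_zsmul]
    rw [this]
    exact add_mem (zsmul_mem hprod a) (zsmul_mem (hWm q g) b)
  let Φ : Set T → {H : AddSubgroup G // IsClosed (H : Set G)} := fun X =>
    ⟨⨅ x ∈ X, W x, by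
      simp only [AddSubgroup.coe_iInf]
      exact isClosed_biInter fun x _ => (W x).isClosed_of_isOpen (hWo x)⟩
  have hΦ : Function.Injective Φ := by
    intro X Y hXY
    have h : ⨅ x ∈ X, W x = ⨅ x ∈ Y, W x := congrArg Subtype.val hXY
    ext q
    exact ⟨fun hq => key Y q (h ▸ iInf₂_le q hq), fun hq => key X q (h ▸ iInf₂_le q hq)⟩
  have : Countable (Set T) := hΦ.countable
  exact Set.finite_coe_iff.1 finite_of_countable_set

/-- By Baire's theorem, a compact abelian group with countably many closed subgroups has an open
procyclic subgroup. -/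
theorem exists_isOpen_closure_zmultiples [T2Space G]
    [Countable {H : AddSubgroup G // IsClosed (H : Set G)}] :
    ∃ g : G, IsOpen ((AddSubgroup.zmultiples g).topologicalClosure : Set G) := by
  let P := {H : {H : AddSubgroup G // IsClosed (H : Set G)} //
    ∃ g, (AddSubgroup.zmultiples g).topologicalClosure = H.1}
  obtain ⟨⟨⟨H, hH⟩, g, hg⟩, x, hx⟩ := nonempty_interior_of_iUnion_of_closed
    (f := fun H : P => (H.1.1 : Set G)) (fun H => H.1.2) (by
      refine Set.eq_univ_of_forall fun g => Set.mem_iUnion.2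
        ⟨⟨⟨_, (AddSubgroup.zmultiples g).isClosed_topologicalClosure⟩, g, rfl⟩, ?_⟩
      exact AddSubgroup.le_topologicalClosure _ (AddSubgroup.mem_zmultiples g))
  refine ⟨g, ?_⟩
  rw [hg]
  exact AddSubgroup.isOpen_of_mem_nhds H (mem_interior_iff_mem_nhds.1 hx)

theorem finite_ker_nsmul [T2Space G] [Countable {H : AddSubgroup G // IsClosed (H : Set G)}]
    {n : ℕ} (hn : n ≠ 0) : Finite (nsmulAddMonoidHom n : G →+ G).ker := by
  set A := (nsmulAddMonoidHom n : G →+ G).ker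
  have hAc : IsClosed (A : Set G) := isClosed_singleton.preimage (continuous_nsmul n)
  have hcount : (A : Set G).Countable := by
    refine (Set.countable_iUnion (ι := {H : {H : AddSubgroup G // IsClosed (H : Set G)} //
      (H.1 : Set G).Finite}) (t := fun H => (H.1.1 : Set G)) fun H => H.2.countable).mono ?_
    intro x hx
    have hfin : (AddSubgroup.zmultiples x : Set G).Finite := by
      rw [finite_zmultiples, isOfFinAddOrder_iff_nsmul_eq_zero]
      exact ⟨n, Nat.pos_of_ne_zero hn, hx⟩
    exact Set.mem_iUnion.2 ⟨⟨⟨_, hfin.isClosed⟩, hfin⟩, AddSubgroup.mem_zmultiples x⟩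
  have : Countable A := hcount.to_subtype
  have : CompactSpace A := isCompact_iff_compactSpace.1 hAc.isCompact
  obtain ⟨a, x, hx⟩ := nonempty_interior_of_iUnion_of_closed (X := A) (f := fun a : A => {a})
    (fun a => isClosed_singleton) (Set.iUnion_of_singleton A)
  have h0 : IsOpen ((⊥ : AddSubgroup A) : Set A) := by
    refine AddSubgroup.isOpen_of_mem_nhds _ (g := 0) ?_
    have hxa : x ∈ ({a} : Set A) := interior_subset hx
    obtain rfl : x = a := hxa
    have := (continuous_const.add continuous_id : Continuous fun y : A => x + y).continuousAt
      (x := 0) |>.preimage_mem_nhds (t := {x}) (by simpa using mem_interior_iff_mem_nhds.1 hx)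
    convert this using 1
    ext y
    simp
  have : DiscreteTopology A := discreteTopology_of_isOpen_singleton_zero (by simpa using h0)
  exact finite_of_compact_of_discrete

end Countability

section Splitting

variable {G : Type*} [AddCommGroup G] [TopologicalSpace G] [IsTopologicalAddGroup G]
  [CompactSpace G] [TotallyDisconnectedSpace G]

/-- If every prime dividing the index of an open subgroup occurs among the `p i`, then each `g : G`
is the image of `1` under a continuous homomorphism from the product of the `ℤ_[p i]`. -/
theorem exists_continuous_hom_pi_padicInt {ι : Type*} [Finite ι] {p : ι → ℕ}
    [∀ i, Fact (p i).Prime] (hp : Function.Injective p)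
    (hidx : ∀ U : AddSubgroup G, IsOpen (U : Set G) → ∀ q : ℕ, q.Prime → q ∣ U.index → ∃ i, p i = q)
    (g : G) : ∃ φ : (∀ i, ℤ_[p i]) →+ G, Continuous φ ∧ φ 1 = g := by
  cases nonempty_fintype ι
  let Γ := (AddSubgroup.zmultiples ((1 : ∀ i, ℤ_[p i]), g)).topologicalClosure
  have hΓc : IsClosed (Γ : Set ((∀ i, ℤ_[p i]) × G)) := AddSubgroup.isClosed_topologicalClosure _
  have hΓ1 : ((1 : ∀ i, ℤ_[p i]), g) ∈ Γ :=
    AddSubgroup.le_topologicalClosure _ (AddSubgroup.mem_zmultiples _)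
  have : CompactSpace Γ := isCompact_iff_compactSpace.1 hΓc.isCompact
  let f : Γ →+ (∀ i, ℤ_[p i]) := (AddMonoidHom.fst _ G).comp Γ.subtype
  have hfc : Continuous f := continuous_fst.comp continuous_subtype_val
  have hsurj : Function.Surjective f := by
    intro c
    refine (denseRange_intCast_pi_padicInt hp).induction_on
      (p := fun c => c ∈ Set.range f) c (isCompact_range hfc).isClosed fun k => ?_
    exact ⟨⟨_, zsmul_mem hΓ1 k⟩, by simp [f]⟩
  have hinj : Function.Injective f := by
    rw [injective_iff_map_eq_zero]
    rintro ⟨⟨c, x⟩, hcx⟩ hc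
    obtain rfl : c = 0 := hc
    suffices hx : x = 0 by subst hx; rfl
    by_contra hx
    obtain ⟨U, hU⟩ := ProfiniteGrp.exist_openNormalAddSubgroup_sub_open_nhds_of_zero
      (G := G) (U := {x}ᶜ) isOpen_compl_singleton (by simpa using Ne.symm hx)
    have hUo : IsOpen (U.toAddSubgroup : Set G) := U.isOpen'
    have : Finite (G ⧸ U.toAddSubgroup) := AddSubgroup.quotient_finite_of_isOpen _ hUo
    set n := U.toAddSubgroup.index
    have hn0 : n ≠ 0 := AddSubgroup.index_ne_zero_of_finite
    have hV : ({c : ∀ i, ℤ_[p i] | ∀ i, ‖c i‖ ≤ ‖(n : ℤ_[p i])‖} : Set _) ∈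
        nhds (0 : ∀ i, ℤ_[p i]) := by
      have : {c : ∀ i, ℤ_[p i] | ∀ i, ‖c i‖ ≤ ‖(n : ℤ_[p i])‖} =
          Set.pi Set.univ fun i => Metric.closedBall (0 : ℤ_[p i]) ‖(n : ℤ_[p i])‖ := by
        ext; simp
      rw [this]
      refine set_pi_mem_nhds Set.finite_univ fun i _ => Metric.closedBall_mem_nhds _ ?_
      exact norm_pos_iff.2 (Nat.cast_ne_zero.2 hn0)
    have hW : {y : G | y - x ∈ U.toAddSubgroup} ∈ nhds x :=
      (hUo.preimage (continuous_id.sub continuous_const)).mem_nhds (by simp)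
    obtain ⟨z, ⟨hz₁, hz₂⟩, hz⟩ := mem_closure_iff_nhds.1 hcx _ (prod_mem_nhds hV hW)
    obtain ⟨k, rfl⟩ := AddSubgroup.mem_zmultiples_iff.1 hz
    obtain ⟨l, rfl⟩ : (n : ℤ) ∣ k := dvd_of_forall_norm_le (hidx _ hUo) (by simpa using hz₁)
    have hkg : ((n : ℤ) * l) • g ∈ U.toAddSubgroup := by
      rw [mul_zsmul, natCast_zsmul]
      exact AddSubgroup.nsmul_index_mem _ _
    have : x ∈ U.toAddSubgroup := by
      simpa using sub_mem hkg hz₂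
    exact hU this rfl
  let e := AddEquiv.ofBijective f ⟨hinj, hsurj⟩
  have he : Continuous e.symm :=
    (Continuous.homeoOfEquivCompactToT2 (f := e.toEquiv) hfc).symm.continuous
  refine ⟨((AddMonoidHom.snd _ G).comp Γ.subtype).comp e.symm.toAddMonoidHom,
    (continuous_snd.comp continuous_subtype_val).comp he, ?_⟩
  have : e.symm 1 = ⟨_, hΓ1⟩ := e.symm_apply_eq.2 rfl
  simp [this]

/-- A closed subgroup containing an element with nonzero `i`-th coordinate contains a nonzero
integer multiple of the whole `i`-th factor. -/
theorem exists_nsmul_single_mem {ι : Type*} [Finite ι] [DecidableEq ι] {p : ι → ℕ}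
    [∀ i, Fact (p i).Prime] (hp : Function.Injective p) {K : AddSubgroup (∀ i, ℤ_[p i])}
    (hK : IsClosed (K : Set (∀ i, ℤ_[p i]))) {c : ∀ i, ℤ_[p i]} (hc : c ∈ K) {i : ι}
    (hci : c i ≠ 0) : ∃ n : ℕ, n ≠ 0 ∧ ∀ z : ℤ_[p i], n • Pi.single i z ∈ K := by
  refine ⟨p i ^ (c i).valuation, pow_ne_zero _ (Fact.out : (p i).Prime).ne_zero, fun z => ?_⟩
  obtain ⟨u, h⟩ : ∃ u : ℤ_[p i]ˣ, c i = u * (p i : ℤ_[p i]) ^ (c i).valuation :=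
    ⟨_, PadicInt.unitCoeff_spec hci⟩
  convert mul_mem_of_isClosed_pi_padicInt hp hK
    (Pi.single i ((u⁻¹ : ℤ_[p i]ˣ) * z)) hc using 1
  rw [← Pi.single_mul_left, ← Pi.single_smul]
  congr 1
  conv_rhs => rw [h]
  rw [nsmul_eq_mul, Nat.cast_pow, mul_assoc, mul_left_comm z, Units.inv_mul_cancel_left, mul_comm]

/-- A profinite abelian group with countably many closed subgroups is the direct sum of an
`n`-torsion subgroup and a product of rings of `p`-adic integers for distinct primes. -/
theorem exists_complement_ker_nsmul [T2Space G]
    [Countable {H : AddSubgroup G // IsClosed (H : Set G)}] :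
    ∃ (κ : Type) (_ : Finite κ) (p : κ → ℕ) (_ : ∀ i, Fact (p i).Prime),
      Function.Injective p ∧ ∃ (n : ℕ) (ψ : (∀ i, ℤ_[p i]) →+ G), n ≠ 0 ∧ Continuous ψ ∧
        (∀ c, n • ψ c = 0 → c = 0) ∧ ∀ x, ∃ c, n • (x - ψ c) = 0 := by
  classical
  let T := {q : ℕ | q.Prime ∧ ∃ U : AddSubgroup G, IsOpen (U : Set G) ∧ q ∣ U.index}
  have : Finite T := Set.finite_coe_iff.2 finite_primes_dvd_index
  cases nonempty_fintype T
  let p : T → ℕ := Subtype.val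
  have hp : Function.Injective p := Subtype.val_injective
  have : ∀ i, Fact (p i).Prime := fun i => ⟨i.2.1⟩
  have hhom := exists_continuous_hom_pi_padicInt (G := G) hp
    fun U hU q hq hdvd => ⟨⟨q, hq, U, hU, hdvd⟩, rfl⟩
  obtain ⟨g, hg⟩ := exists_isOpen_closure_zmultiples (G := G)
  obtain ⟨φ, hφc, hφg⟩ := hhom g
  set C := (AddSubgroup.zmultiples g).topologicalClosure
  have hCφ : C ≤ φ.range := by
    refine AddSubgroup.topologicalClosure_minimal _ ?_ (isCompact_range hφc).isClosed
    rw [AddSubgroup.zmultiples_le]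
    exact ⟨1, hφg⟩
  have : Finite (G ⧸ C) := AddSubgroup.quotient_finite_of_isOpen _ hg
  have hKc : IsClosed (φ.ker : Set (∀ i, ℤ_[p i])) := isClosed_singleton.preimage hφc
  let S : Set T := {i | ∀ c ∈ φ.ker, c i = 0}
  have hN : ∀ i, ∃ n : ℕ, n ≠ 0 ∧ (i ∉ S → ∀ z : ℤ_[p i], n • Pi.single i z ∈ φ.ker) := by
    intro i
    by_cases hi : i ∈ S
    · exact ⟨1, one_ne_zero, fun h => (h hi).elim⟩
    · have hi' : ∃ c ∈ φ.ker, c i ≠ 0 := by simpa [S] using hi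
      obtain ⟨c, hc, hci⟩ := hi'
      obtain ⟨n, hn, h⟩ := exists_nsmul_single_mem hp hKc hc hci
      exact ⟨n, hn, fun _ => h⟩
  choose N hN0 hN using hN
  have hNker : ∀ c : ∀ i, ℤ_[p i], (∀ i ∈ S, c i = 0) → (∏ i, N i) • c ∈ φ.ker := by
    intro c hc
    rw [← Finset.univ_sum_single c, Finset.smul_sum]
    refine sum_mem fun i _ => ?_
    by_cases hi : i ∈ S
    · simp [hc i hi]
    · obtain ⟨m, hm⟩ := Finset.dvd_prod_of_mem N (Finset.mem_univ i)
      rw [hm, mul_nsmul]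
      exact nsmul_mem (hN i hi (c i)) m
  let pS : S → ℕ := fun i => p i
  have hpS : Function.Injective pS := hp.comp Subtype.val_injective
  let j : (∀ i : S, ℤ_[pS i]) →+ ∀ i, ℤ_[p i] :=
    { toFun := fun c i => if h : i ∈ S then c ⟨i, h⟩ else 0
      map_zero' := by ext i; simp
      map_add' := fun c d => by ext i; by_cases h : i ∈ S <;> simp [h] }
  have hj : ∀ (c : ∀ i : S, ℤ_[pS i]) (i : S), j c i = c i := fun c i => by simp [j]
  have hjc : Continuous j := by
    refine continuous_pi fun i => ?_
    by_cases h : i ∈ S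
    · simpa [j, h] using continuous_apply (⟨i, h⟩ : S)
    · simpa [j, h] using continuous_const
  let proj : (∀ i, ℤ_[p i]) →+ ∀ i : S, ℤ_[pS i] :=
    { toFun := fun c i => c i
      map_zero' := rfl
      map_add' := fun _ _ => rfl }
  have hprojc : Continuous proj := continuous_pi fun i => continuous_apply (i : T)
  have hprojj : ∀ c, proj (j c) = c := fun c => funext fun i => hj c i
  let φS := φ.comp j
  have hφSc : Continuous φS := hφc.comp hjc
  have hφS : Function.Injective φS := by
    rw [injective_iff_map_eq_zero]
    intro c hc
    ext1 i
    rw [← hj c i]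
    exact i.2 (j c) hc
  let n := (∏ i, N i) * C.index
  have hn : n ≠ 0 := mul_ne_zero (Finset.prod_ne_zero_iff.2 fun i _ => hN0 i)
    AddSubgroup.index_ne_zero_of_finite
  have hnφ : ∀ x : G, ∃ c, φS c = n • x := by
    intro x
    obtain ⟨c, hc⟩ := hCφ (C.nsmul_index_mem x)
    refine ⟨(∏ i, N i) • proj c, ?_⟩
    have h0 : (∏ i, N i) • (j (proj c) - c) ∈ φ.ker :=
      hNker _ fun i hi => sub_eq_zero.2 (hj (proj c) ⟨i, hi⟩)
    rw [AddMonoidHom.mem_ker, map_nsmul, map_sub, nsmul_sub, sub_eq_zero, hc] at h0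
    simp only [n, mul_nsmul', φS, AddMonoidHom.comp_apply, map_nsmul, h0]
  let L := (nsmulAddMonoidHom n : G →+ G).range.comap φS
  have hLc : IsClosed (L : Set (∀ i : S, ℤ_[pS i])) :=
    (isCompact_range (continuous_nsmul n)).isClosed.preimage hφSc
  let I : Ideal (∀ i : S, ℤ_[pS i]) :=
    { carrier := L
      zero_mem' := L.zero_mem
      add_mem' := L.add_mem
      smul_mem' := fun c _ hx => mul_mem_of_isClosed_pi_padicInt hpS hLc c hx }
  obtain ⟨d, hd⟩ := (IsPrincipalIdealRing.principal I).principal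
  have hdI : d ∈ I := hd ▸ Ideal.mem_span_singleton_self d
  obtain ⟨x₀, hx₀⟩ : ∃ x, n • x = φS d := hdI
  have hdreg : ∀ c, d * c = 0 → c = 0 := by
    intro c hc
    have hnI : (n : ∀ i : S, ℤ_[pS i]) ∈ I := ⟨φS 1, by
      change n • φS 1 = _
      rw [← map_nsmul, nsmul_one]⟩
    rw [hd, Ideal.submodule_span_eq, Ideal.mem_span_singleton'] at hnI
    obtain ⟨b, hb⟩ := hnI
    have h : (n : ∀ i : S, ℤ_[pS i]) * c = 0 := by rw [← hb, mul_assoc, hc, mul_zero]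
    ext1 i
    have := congrFun h i
    simpa [hn] using this
  obtain ⟨χ, hχc, hχ⟩ := hhom x₀
  have hcomp : (nsmulAddMonoidHom n).comp χ = (φS.comp (AddMonoidHom.mulLeft d)).comp proj := by
    refine pi_padicInt_hom_ext hp ((continuous_nsmul n).comp hχc)
      ((hφSc.comp (continuous_const.mul continuous_id)).comp hprojc) ?_
    have : proj 1 = 1 := rfl
    simp [hχ, hx₀, this]
  have hψ : ∀ c, n • χ (j c) = φS (d * c) := by
    intro c
    simpa [hprojj] using DFunLike.congr_fun hcomp (j c)
  refine ⟨S, inferInstance, pS, fun i => inferInstance, hpS, n, χ.comp j, hn, hχc.comp hjc,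
    fun c hc => hdreg c (hφS ?_), fun x => ?_⟩
  · rw [← hψ, map_zero]
    exact hc
  · obtain ⟨c, hc⟩ := hnφ x
    have hcI : c ∈ I := ⟨x, hc.symm⟩
    rw [hd, Ideal.submodule_span_eq, Ideal.mem_span_singleton] at hcI
    obtain ⟨b, rfl⟩ := hcI
    refine ⟨b, ?_⟩
    rw [nsmul_sub, ← hc, sub_eq_zero]
    exact (hψ b).symm

end Splitting

theorem PadicInt.dvd_of_norm_le_norm {p : ℕ} [Fact p.Prime] {x y : ℤ_[p]} (hx : x ≠ 0)
    (h : ‖y‖ ≤ ‖x‖) : x ∣ y := by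
  have hx' : (x : ℚ_[p]) ≠ 0 := fun h => hx (Subtype.ext h)
  refine ⟨⟨y / x, ?_⟩, Subtype.ext ?_⟩
  · rw [norm_div]
    exact div_le_one_of_le₀ h (norm_nonneg _)
  · exact (mul_div_cancel₀ (y : ℚ_[p]) hx').symm

/-- A closed subgroup of a product of a finite group and rings of `p`-adic integers for distinct
primes is the closure of its subgroup of points with integral coordinates. -/
theorem subset_closure_integral_points {ι : Type*} [Finite ι] {p : ι → ℕ}
    [∀ i, Fact (p i).Prime] (hp : Function.Injective p) {A : Type*} [AddCommGroup A] [Finite A]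
    [TopologicalSpace A] {H : AddSubgroup (A × ∀ i, ℤ_[p i])}
    (hH : IsClosed (H : Set (A × ∀ i, ℤ_[p i]))) :
    (H : Set (A × ∀ i, ℤ_[p i])) ⊆
      closure {x | x ∈ H ∧ ∃ (a : A) (z : ι → ℤ), x = (a, fun i => (z i : ℤ_[p i]))} := by
  cases nonempty_fintype ι
  rintro ⟨a, y⟩ hay
  set n := Nat.card A
  have hn : n ≠ 0 := Nat.card_pos.ne'
  have hmul : ∀ c : ∀ i, ℤ_[p i], ((0 : A), n • (c * y)) ∈ H := by
    intro c
    refine (denseRange_intCast_pi_padicInt hp).induction_on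
      (p := fun c => ((0 : A), n • (c * y)) ∈ H) c
      (hH.preimage (by fun_prop)) fun k => ?_
    convert zsmul_mem (nsmul_mem hay n) k using 1
    ext1
    · simp [n, card_nsmul_eq_zero']
    · simp [zsmul_eq_mul, mul_left_comm]
  rw [mem_closure_iff_nhds]
  intro U hU
  obtain ⟨V, hV, W, hW, hVW⟩ := mem_nhds_prod_iff.1 hU
  rw [nhds_pi, Filter.mem_pi'] at hW
  obtain ⟨F, t, ht, htW⟩ := hW
  have hz : ∀ i, ∃ (z : ℤ) (c : ℤ_[p i]),
      (z : ℤ_[p i]) ∈ t i ∧ (z : ℤ_[p i]) = y i + n • (c * y i) := by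
    intro i
    rcases eq_or_ne (y i) 0 with h0 | h0
    · exact ⟨0, 0, by simpa [h0] using mem_of_mem_nhds (ht i), by simp [h0]⟩
    · have hball : Metric.closedBall (y i) ‖(n : ℤ_[p i]) * y i‖ ∈ nhds (y i) :=
        Metric.closedBall_mem_nhds _ (norm_pos_iff.2 (mul_ne_zero (Nat.cast_ne_zero.2 hn) h0))
      obtain ⟨_, ⟨hzt, hzb⟩, z, rfl⟩ := mem_closure_iff_nhds.1
        (PadicInt.denseRange_intCast (p := p i) (y i)) _ (Filter.inter_mem (ht i) hball)
      rw [mem_closedBall_iff_norm] at hzb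
      obtain ⟨c, hc⟩ : (n : ℤ_[p i]) * y i ∣ (z : ℤ_[p i]) - y i :=
        PadicInt.dvd_of_norm_le_norm (mul_ne_zero (Nat.cast_ne_zero.2 hn) h0) hzb
      refine ⟨z, c, hzt, ?_⟩
      rw [nsmul_eq_mul]
      linear_combination hc
  choose z c hzt hzc using hz
  refine ⟨(a, fun i => (z i : ℤ_[p i])), hVW ⟨mem_of_mem_nhds hV, htW fun i _ => hzt i⟩, ?_,
    a, z, rfl⟩
  convert add_mem hay (hmul c) using 1
  ext1
  · simp
  · ext1 i
    simp [hzc i]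

theorem countable_submodule {R M : Type*} [Ring R] [AddCommGroup M] [Module R M] [Countable M]
    [IsNoetherian R M] : Countable (Submodule R M) := by
  have : Function.Surjective fun s : Finset M => Submodule.span R (s : Set M) := fun N =>
    IsNoetherian.noetherian N
  exact this.countable

theorem countable_closedSubgroups_prod_pi_padicInt {ι : Type*} [Finite ι] {p : ι → ℕ}
    [∀ i, Fact (p i).Prime] (hp : Function.Injective p) {A : Type*} [AddCommGroup A] [Finite A]
    [TopologicalSpace A] :
    Countable {H : AddSubgroup (A × ∀ i, ℤ_[p i]) // IsClosed (H : Set (A × ∀ i, ℤ_[p i]))} := by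
  let f : (A × (ι → ℤ)) →+ A × ∀ i, ℤ_[p i] :=
    { toFun := fun x => (x.1, fun i => (x.2 i : ℤ_[p i]))
      map_zero' := by ext <;> simp
      map_add' := fun x y => by ext <;> simp }
  have : Countable (Submodule ℤ (A × (ι → ℤ))) := countable_submodule
  have hle : ∀ H K : {H : AddSubgroup (A × ∀ i, ℤ_[p i]) //
      IsClosed (H : Set (A × ∀ i, ℤ_[p i]))}, H.1.comap f = K.1.comap f → H.1 ≤ K.1 := by
    rintro ⟨H, hH⟩ ⟨K, hK⟩ h x hx
    refine closure_minimal ?_ hK (subset_closure_integral_points hp hH hx)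
    rintro _ ⟨hx, a, z, rfl⟩
    have : (a, z) ∈ H.comap f := hx
    rw [h] at this
    exact this
  have hinj : Function.Injective fun H : {H : AddSubgroup (A × ∀ i, ℤ_[p i]) //
      IsClosed (H : Set (A × ∀ i, ℤ_[p i]))} => AddSubgroup.toIntSubmodule (H.1.comap f) := by
    intro H K h
    have h := AddSubgroup.toIntSubmodule.injective h
    exact Subtype.ext (le_antisymm (hle H K h) (hle K H h.symm))
  exact hinj.countable

/-- Let `G` be an abelian profinite group (written additively).  Then the set
of closed subgroups of `G` is countable if and only if `G` is topologically isomorphic to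
`A × ℤ_{p₁} × ⋯ × ℤ_{p_r}` for some `r ≥ 0`, pairwise distinct primes `p₁, …, p_r`, and some
finite abelian group `A`. -/
theorem countable_closedSubgroups_iff_abelian
    {G : Type*} [AddCommGroup G] [TopologicalSpace G] [IsTopologicalAddGroup G]
    [CompactSpace G] [T2Space G] [TotallyDisconnectedSpace G] :
    Countable {H : AddSubgroup G // IsClosed (H : Set G)} ↔
      ∃ (r : ℕ) (ps : Fin r → ℕ) (hps : ∀ i, (ps i).Prime),
        Function.Injective ps ∧
        ∃ (A : FiniteAddCommGroup)
          (e : G ≃+ (A.carrier × ((i : Fin r) → @PadicInt (ps i) ⟨hps i⟩))),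
          Continuous e ∧ Continuous e.symm := by
  constructor
  · intro hcount
    obtain ⟨κ, _, p, hpp, hp, n, ψ, hn, hψc, hψ, hsurj⟩ := exists_complement_ker_nsmul (G := G)
    let σ := Finite.equivFin κ
    have := finite_ker_nsmul (G := G) hn
    let B := (nsmulAddMonoidHom n : G →+ G).ker
    obtain ⟨A, ⟨α⟩⟩ : ∃ A : FiniteAddCommGroup, Nonempty (A.carrier ≃+ B) :=
      ⟨⟨Shrink.{0} B⟩, ⟨Shrink.addEquiv⟩⟩
    let ρ : (∀ i, ℤ_[p i]) ≃+ ∀ i : Fin (Nat.card κ), ℤ_[p (σ.symm i)] :=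
      { Equiv.piCongrLeft' (fun i => ℤ_[p i]) σ with map_add' := fun _ _ => rfl }
    have hρ : Continuous ρ := continuous_pi fun i => continuous_apply (σ.symm i)
    have hρ' : Continuous ρ.symm :=
      (Continuous.homeoOfEquivCompactToT2 (f := ρ.toEquiv) hρ).symm.continuous
    let Ψ : A.carrier × (∀ i : Fin (Nat.card κ), ℤ_[p (σ.symm i)]) →+ G :=
      (B.subtype.comp α.toAddMonoidHom).coprod (ψ.comp ρ.symm.toAddMonoidHom)
    have hΨc : Continuous Ψ :=
      ((continuous_of_discreteTopology (f := fun a => (α a : G))).comp continuous_fst).add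
        ((hψc.comp hρ').comp continuous_snd)
    have hΨ : Function.Bijective Ψ := by
      constructor
      · rw [injective_iff_map_eq_zero]
        rintro ⟨a, c⟩ h
        have h : (α a : G) + ψ (ρ.symm c) = 0 := h
        have ha : n • (α a : G) = 0 := (α a).2
        have hc : ρ.symm c = 0 := hψ _ (by
          rw [eq_neg_of_add_eq_zero_right h, smul_neg, ha, neg_zero])
        rw [hc, map_zero, add_zero] at h
        have hc' : c = 0 := by simpa using hc
        have ha' : a = 0 := by simpa using h
        rw [hc', ha', Prod.mk_zero_zero]
      · intro x
        obtain ⟨c, hc⟩ := hsurj x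
        refine ⟨(α.symm ⟨x - ψ c, hc⟩, ρ c), ?_⟩
        simp [Ψ]
    let e := AddEquiv.ofBijective Ψ hΨ
    refine ⟨Nat.card κ, fun i => p (σ.symm i), fun i => (hpp _).out, hp.comp σ.symm.injective, A,
      e.symm, ?_, hΨc⟩
    exact (Continuous.homeoOfEquivCompactToT2 (f := e.toEquiv) hΨc).symm.continuous
  · rintro ⟨r, ps, hps, hinj, A, e, -, he⟩
    have : ∀ i, Fact (ps i).Prime := fun i => ⟨hps i⟩
    have := countable_closedSubgroups_prod_pi_padicInt hinj (A := A.carrier)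
    let f : {H : AddSubgroup G // IsClosed (H : Set G)} →
        {H : AddSubgroup (A.carrier × ∀ i, ℤ_[ps i]) //
          IsClosed (H : Set (A.carrier × ∀ i, ℤ_[ps i]))} :=
      fun H => ⟨H.1.comap e.symm.toAddMonoidHom, H.2.preimage he⟩
    have hf : Function.Injective f := fun H K h => Subtype.ext <|
      AddSubgroup.comap_injective (f := e.symm.toAddMonoidHom) e.symm.surjective
        (congrArg Subtype.val h)
    exact hf.countable
end

section
/- Let G be a profinite group and H a closed subgroup of G. Suppose there exists an open normal subgroup N of G such that every closed subgroup K of G satisfying NK = NH is conjugate to H in G. Then H is an open subgroup of G. (The hypothesis says exactly that the conjugacy class of H is an isolated point of the space Sub(G)/G of conjugacy classes of closed subgroups, since the sets {conjugacy classes of K : NK = NH}, for N ranging over open normal subgroups of G, form a neighbourhood basis of the class of H.) -/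
/-- Let `G` be a profinite group and `H` a closed subgroup.  If there is an
open normal subgroup `N` of `G` such that every closed subgroup `K` with `NK = NH` is
conjugate to `H` in `G` (i.e. the conjugacy class of `H` is an isolated point of
`Sub(G)/G`), then `H` is open in `G`. -/
theorem isOpen_of_isolated_conjugacyClass
    {G : Type*} [Group G] [TopologicalSpace G] [IsTopologicalGroup G]
    [CompactSpace G] [T2Space G] [TotallyDisconnectedSpace G]
    (H : Subgroup G) (hH : IsClosed (H : Set G))
    (hiso : ∃ N : Subgroup G, IsOpen (N : Set G) ∧ N.Normal ∧
      ∀ K : Subgroup G, IsClosed (K : Set G) → N ⊔ K = N ⊔ H →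
        ∃ g : G, Subgroup.map (MulAut.conj g).toMonoidHom H = K) :
    IsOpen (H : Set G) := by
  obtain ⟨N, hN, -, h⟩ := hiso
  have hopen : IsOpen ((N ⊔ H : Subgroup G) : Set G) := Subgroup.isOpen_mono le_sup_left hN
  obtain ⟨g, hg⟩ := h (N ⊔ H) (Subgroup.isClosed_of_isOpen _ hopen) (by simp)
  have hcomap : H = (N ⊔ H).comap (MulAut.conj g).toMonoidHom := by
    conv_rhs => rw [← hg]
    exact (Subgroup.comap_map_eq_self_of_injective (MulAut.conj g).injective H).symm
  rw [hcomap]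
  have hconj : Continuous fun x : G => g * x * g⁻¹ := by fun_prop
  exact hopen.preimage hconj
end

section
/- Let X be a profinite topological space (compact, Hausdorff, and totally disconnected) and let f : E → F be a morphism of sheaves of abelian groups on X. If the induced map on stalks f_x : E_x → F_x is surjective for every point x ∈ X, then for every compact open subset Y ⊆ X the induced map on sections f(Y) : E(Y) → F(Y) is surjective. -/
open CategoryTheory TopologicalSpace Opposite

universe u

/-- Any open cover of a compact open subset of a profinite space can be refined to a partition
into open subsets. -/
lemma TopologicalSpace.Opens.exists_disjoint_refinement {X : Type*} [TopologicalSpace X]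
    [T2Space X] [TotallyDisconnectedSpace X] {Y : Opens X}
    (hY : IsCompact (Y : Set X)) {ι : Type*} (V : ι → Opens X) (hV : Y ≤ iSup V) :
    ∃ (n : ℕ) (W : Fin n → Opens X), (∀ j, W j ≤ Y) ∧ (∀ j, ∃ i, W j ≤ V i) ∧
      Y ≤ iSup W ∧ ∀ i j, i ≠ j → W i ⊓ W j = ⊥ := by
  have : CompactSpace Y := isCompact_iff_compactSpace.mp hY
  have hcover : IsOpenCover fun i ↦ (⟨_, (V i).2.preimage continuous_subtype_val⟩ : Opens Y) := by
    refine IsOpenCover.mk (eq_top_iff.mpr fun y _ ↦ ?_)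
    obtain ⟨i, hi⟩ := Opens.mem_iSup.mp (hV y.2)
    exact Opens.mem_iSup.mpr ⟨i, hi⟩
  obtain ⟨n, W, hWV, hWcover, hWdisj⟩ := hcover.exists_finite_nonempty_disjoint_clopen_cover
  refine ⟨n, fun j ↦ ⟨_, Y.2.isOpenMap_subtype_val _ (W j).isOpen⟩, fun j ↦ ?_, fun j ↦ ?_,
    fun y hy ↦ ?_, fun i j hij ↦ ?_⟩
  · rintro _ ⟨y, -, rfl⟩
    exact y.2
  · obtain ⟨i, hi⟩ := (hWV j).2
    refine ⟨i, ?_⟩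
    rintro _ ⟨y, hy, rfl⟩
    exact hi hy
  · obtain ⟨j, hj⟩ := Set.mem_iUnion.mp (hWcover (Set.mem_univ ⟨y, hy⟩))
    exact Opens.mem_iSup.mpr ⟨j, _, hj, rfl⟩
  · rw [eq_bot_iff]
    rintro _ ⟨⟨y, hy, rfl⟩, z, hz, hzy⟩
    obtain rfl := Subtype.ext hzy
    have hmem : z ∈ W i ⊓ W j := ⟨hy, hz⟩
    rwa [(hWdisj hij).eq_bot] at hmem

namespace TopCat.Sheaf

/-- A sheaf of abelian groups has only the zero section over the empty set. -/
lemma subsingleton_sections_of_eq_bot {X : TopCat.{u}} (E : TopCat.Sheaf AddCommGrpCat.{u} X)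
    {U : Opens X} (hU : U = ⊥) : Subsingleton (E.obj.obj (op U)) :=
  AddCommGrpCat.subsingleton_of_isZero
    ((E.isTerminalOfEqEmpty hU).isZero)

/-- A section of the target of a morphism of sheaves of abelian groups lifts as soon as it lifts
on each member of a disjoint open cover. -/
lemma exists_lift_of_disjoint_cover {X : TopCat.{u}} {E F : TopCat.Sheaf AddCommGrpCat.{u} X}
    (f : E ⟶ F) {Y : Opens X} (t : F.obj.obj (op Y)) {ι : Type*} (W : ι → Opens X)
    (hWY : ∀ i, W i ≤ Y) (hcover : Y ≤ iSup W) (hdisj : ∀ i j, i ≠ j → W i ⊓ W j = ⊥)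
    (hlift : ∀ i, ∃ s, f.hom.app (op (W i)) s = F.obj.map (homOfLE (hWY i)).op t) :
    ∃ s, f.hom.app (op Y) s = t := by
  choose s hs using hlift
  have hcompat : TopCat.Presheaf.IsCompatible E.obj W s := fun i j ↦ by
    by_cases hij : i = j
    · subst hij
      rfl
    · exact (E.subsingleton_sections_of_eq_bot (hdisj i j hij)).elim _ _
  obtain ⟨g, hg, -⟩ := E.existsUnique_gluing' W Y (fun i ↦ homOfLE (hWY i)) hcover s hcompat
  refine ⟨g, F.eq_of_locally_eq' W Y (fun i ↦ homOfLE (hWY i)) hcover _ _ fun i ↦ ?_⟩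
  rw [← NatTrans.naturality_apply, hg, hs]

end TopCat.Sheaf

/-- Let `X` be a profinite space (compact, Hausdorff, totally disconnected)
and `f : E ⟶ F` a morphism of sheaves of abelian groups on `X`.  If the induced map on stalks
`E_x → F_x` is surjective for every `x ∈ X`, then for every compact open subset `Y ⊆ X` the
map on sections `E(Y) → F(Y)` is surjective. -/
theorem surjective_sections_of_surjective_stalks
    {X : TopCat} [CompactSpace X] [T2Space X] [TotallyDisconnectedSpace X]
    (E F : TopCat.Sheaf AddCommGrpCat X) (f : E ⟶ F)
    (hstalk : ∀ x : X,
      Function.Surjective ((TopCat.Presheaf.stalkFunctor AddCommGrpCat x).map f.hom))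
    (Y : Opens X) (hY : IsCompact (Y : Set X)) :
    Function.Surjective (f.hom.app (op Y)) := by
  intro t
  have hloc := (TopCat.Presheaf.isLocallySurjective_iff f.hom).mp
    ((TopCat.Presheaf.locally_surjective_iff_surjective_on_stalks f.hom).mpr hstalk) Y t
  choose V hVY hlift hmem using fun y : Y ↦ hloc y y.2
  obtain ⟨n, W, hWY, hWV, hcover, hdisj⟩ := Opens.exists_disjoint_refinement hY V
    fun y hy ↦ Opens.mem_iSup.mpr ⟨⟨y, hy⟩, hmem ⟨y, hy⟩⟩
  refine TopCat.Sheaf.exists_lift_of_disjoint_cover f t W hWY hcover hdisj fun j ↦ ?_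
  obtain ⟨y, hy⟩ := hWV j
  obtain ⟨s, hs⟩ := hlift y
  refine ⟨E.obj.map (homOfLE hy).op s, ?_⟩
  rw [NatTrans.naturality_apply, hs]
  exact TopCat.Presheaf.restrict_restrict hy (hVY y) t
end
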